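/- arXiv:math/0701880 — 4 statements merged into one kernel-verified Lean document; each statement's English description precedes it below -/
import Mathlib

section
/- For every α > 0 and all x, y ∈ ℝ, the integral ∫_{−∞}^{∞} e^{αz} Ai(x+z) Ai(y+z) dz converges absolutely and equals (4πα)^{−1/2} · exp( −(x−y)²/(4α) − α(x+y)/2 + α³/12 ). -/
/-!
For `c > 0` the contour of the Airy integral can be shifted from the real line to `Im z = c`
(Cauchy's theorem on rectangles, `tendsto_airy_integral`). There the integrand has Gaussian decay,
and the result says that `F_c(x) = exp(cx) Ai(x)` is the inverse Fourier transform of the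
integrable continuous function `h_c(s) = exp(i(2πs + ic)³/3)` (`exp_mul_Ai_eq_fourierInv`). In
particular each `F_c` is bounded, and comparing `F_c` with `F_{2c}` and `F_{c/2}` shows that it
decays exponentially at both ends (`integrable_exp_mul_Ai`).

With `c = α/2` the integrand of the theorem is `exp(-α(x+y)/2) F_c(x+z) F_c(y+z)`. This is
integrable, and by the self-adjointness of the Fourier transform together with Fourier inversion
its integral becomes that of `h_c(s) h_c(-s) exp(-2πi(x-y)s)` (`integral_shift_mul`). The cubic
phases cancel in `h_c(s) h_c(-s)`, so that a Gaussian integral remains.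
-/

open MeasureTheory Real Filter

/-- The Airy function `Ai(x) = (1/π)·lim_{R→∞} ∫_0^R cos(t³/3 + x·t) dt`. -/
noncomputable def Ai (x : ℝ) : ℝ :=
  (1 / Real.pi) * limUnder Filter.atTop
    (fun R : ℝ => ∫ t in (0:ℝ)..R, Real.cos (t ^ 3 / 3 + x * t))

open scoped FourierTransform Topology

/-! ### The contour shift -/

/-- The integrand `exp(i(z³/3 + xz))` of the Airy integral, as an entire function of `z`. -/
noncomputable def airyPhase (x : ℝ) (z : ℂ) : ℂ :=
  Complex.exp (Complex.I * (z ^ 3 / 3 + x * z))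

lemma airyPhase_differentiable (x : ℝ) : Differentiable ℂ (airyPhase x) := by
  unfold airyPhase
  fun_prop

lemma norm_airyPhase (x t s : ℝ) :
    ‖airyPhase x (t + s * Complex.I)‖ = Real.exp (-s * t ^ 2 + (s ^ 3 / 3 - x * s)) := by
  unfold airyPhase
  rw [Complex.norm_exp]
  have h : Complex.I * (((t : ℂ) + s * Complex.I) ^ 3 / 3 + x * (t + s * Complex.I)) =
      ((-s * t ^ 2 + (s ^ 3 / 3 - x * s) : ℝ) : ℂ) +
        ((t ^ 3 / 3 - t * s ^ 2 + x * t : ℝ) : ℂ) * Complex.I := by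
    push_cast
    linear_combination (norm := ring_nf)
      (s * t ^ 2 + x * s + Complex.I * t * s ^ 2 + (s : ℂ) ^ 3 / 3 * (Complex.I ^ 2 - 1)) *
        Complex.I_sq
  rw [h, Complex.add_re, Complex.ofReal_re, Complex.re_ofReal_mul, Complex.I_re, mul_zero,
    add_zero]

lemma integrable_airyPhase (x : ℝ) {c : ℝ} (hc : 0 < c) :
    Integrable (fun t : ℝ => airyPhase x (t + c * Complex.I)) := by
  have hcont : Continuous (fun t : ℝ => airyPhase x (t + c * Complex.I)) :=
    (airyPhase_differentiable x).continuous.comp (by fun_prop)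
  rw [← integrable_norm_iff hcont.aestronglyMeasurable]
  simp_rw [norm_airyPhase, Real.exp_add]
  exact (integrable_exp_neg_mul_sq hc).mul_const _

/-- On the vertical side the integrand has modulus at most a constant times `exp(-sR²)`, so
dominated convergence applies although there is no decay at the endpoint `s = 0`. -/
lemma tendsto_vertical (x : ℝ) {c : ℝ} (hc : 0 < c) {u : ℝ → ℝ} (hu : ∀ R, u R ^ 2 = R ^ 2) :
    Tendsto (fun R : ℝ => ∫ s in (0 : ℝ)..c, airyPhase x (u R + s * Complex.I)) atTop (𝓝 0) := by
  have h := intervalIntegral.tendsto_integral_filter_of_dominated_convergence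
    (μ := volume) (a := 0) (b := c) (l := atTop)
    (F := fun (R : ℝ) (s : ℝ) => airyPhase x (u R + s * Complex.I)) (f := fun _ => 0)
    (fun s : ℝ => Real.exp (s ^ 3 / 3 - x * s)) ?_ ?_ ?_ ?_
  · simpa using h
  · refine Eventually.of_forall fun R => Continuous.aestronglyMeasurable ?_
    exact (airyPhase_differentiable x).continuous.comp (by fun_prop)
  · refine Eventually.of_forall fun R => Eventually.of_forall fun s hs => ?_
    rw [Set.uIoc_of_le hc.le] at hs
    rw [norm_airyPhase, Real.exp_le_exp]
    nlinarith [mul_nonneg hs.1.le (sq_nonneg (u R))]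
  · exact Continuous.intervalIntegrable (by fun_prop) _ _
  · refine Eventually.of_forall fun s hs => ?_
    rw [Set.uIoc_of_le hc.le] at hs
    rw [tendsto_zero_iff_norm_tendsto_zero]
    simp_rw [norm_airyPhase, hu]
    refine Real.tendsto_exp_atBot.comp (tendsto_atBot_add_const_right _ _ ?_)
    exact (tendsto_pow_atTop two_ne_zero).const_mul_atTop_of_neg (neg_lt_zero.2 hs.1)

lemma integral_airyPhase_symm (x R : ℝ) :
    (∫ t in (-R)..R, airyPhase x t) =
      2 * ((∫ t in (0 : ℝ)..R, Real.cos (t ^ 3 / 3 + x * t) : ℝ) : ℂ) := by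
  have hcont : Continuous (fun t : ℝ => airyPhase x t) :=
    (airyPhase_differentiable x).continuous.comp (by fun_prop)
  have hcont' : Continuous (fun t : ℝ => airyPhase x ((-t : ℝ) : ℂ)) :=
    hcont.comp continuous_neg
  have hneg : (∫ t in (-R)..0, airyPhase x t) =
      ∫ t in (0 : ℝ)..R, airyPhase x ((-t : ℝ) : ℂ) := by
    rw [intervalIntegral.integral_comp_neg (fun t : ℝ => airyPhase x t), neg_zero]
  rw [← intervalIntegral.integral_add_adjacent_intervals
    (hcont.intervalIntegrable (-R) 0) (hcont.intervalIntegrable 0 R), hneg,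
    ← intervalIntegral.integral_add (hcont'.intervalIntegrable _ _)
      (hcont.intervalIntegrable _ _),
    ← intervalIntegral.integral_ofReal, ← intervalIntegral.integral_const_mul]
  refine intervalIntegral.integral_congr fun t _ => ?_
  simp only [airyPhase]
  push_cast
  rw [Complex.two_cos, add_comm]
  congr 2 <;> ring

/-- Shifting the contour from the real line to `Im z = c` turns the conditionally convergent
Airy integral into an absolutely convergent one. -/
lemma tendsto_airy_integral (x : ℝ) {c : ℝ} (hc : 0 < c) :
    Tendsto (fun R : ℝ => 2 * ((∫ t in (0 : ℝ)..R, Real.cos (t ^ 3 / 3 + x * t) : ℝ) : ℂ)) atTop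
      (𝓝 (∫ t : ℝ, airyPhase x (t + c * Complex.I))) := by
  have hrect (R : ℝ) : (2 * ((∫ t in (0 : ℝ)..R, Real.cos (t ^ 3 / 3 + x * t) : ℝ) : ℂ)) =
      (∫ t in (-R)..R, airyPhase x (t + c * Complex.I))
      - Complex.I * (∫ s in (0 : ℝ)..c, airyPhase x (R + s * Complex.I))
      + Complex.I * (∫ s in (0 : ℝ)..c, airyPhase x ((-R : ℝ) + s * Complex.I)) := by
    have h := Complex.integral_boundary_rect_eq_zero_of_differentiableOn (airyPhase x)
      ((-R : ℝ) : ℂ) (R + c * Complex.I) (airyPhase_differentiable x).differentiableOn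
    simp only [Complex.ofReal_re, Complex.ofReal_im, Complex.add_re, Complex.add_im,
      Complex.mul_re, Complex.mul_im, Complex.I_re, Complex.I_im, mul_zero, mul_one, zero_mul,
      sub_zero, add_zero, zero_add, Complex.ofReal_zero, smul_eq_mul] at h
    rw [integral_airyPhase_symm] at h
    linear_combination h
  simp_rw [hrect]
  have h1 := intervalIntegral_tendsto_integral (integrable_airyPhase x hc)
    tendsto_neg_atTop_atBot tendsto_id
  have h2 := (tendsto_vertical x hc (u := fun R => R) (fun R => rfl)).const_mul Complex.I
  have h3 := (tendsto_vertical x hc (u := fun R => -R) (fun R => neg_sq R)).const_mul Complex.I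
  simpa using (h1.sub h2).add h3

lemma Ai_eq_integral (x : ℝ) {c : ℝ} (hc : 0 < c) :
    (Ai x : ℂ) = 1 / (2 * π) * ∫ t : ℝ, airyPhase x (t + c * Complex.I) := by
  set A := ∫ t : ℝ, airyPhase x (t + c * Complex.I)
  have h := (tendsto_airy_integral x hc).const_mul (1 / 2 : ℂ)
  have h' : Tendsto (fun R : ℝ => ((∫ t in (0 : ℝ)..R, Real.cos (t ^ 3 / 3 + x * t) : ℝ) : ℂ))
      atTop (𝓝 (1 / 2 * A)) := by
    refine h.congr fun R => ?_
    ring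
  have hre := (Complex.continuous_re.tendsto _).comp h'
  have hre' : Tendsto (fun R : ℝ => (∫ t in (0 : ℝ)..R, Real.cos (t ^ 3 / 3 + x * t)))
      atTop (𝓝 (1 / 2 * A).re) := hre
  have hA : (((1 / 2 * A).re : ℝ) : ℂ) = 1 / 2 * A :=
    tendsto_nhds_unique ((Complex.continuous_ofReal.tendsto _).comp hre') h'
  rw [Ai, hre'.limUnder_eq]
  push_cast
  rw [hA]
  ring

/-! ### The weighted Airy function as an inverse Fourier transform -/

/-- The function `s ↦ exp(i(2πs + ic)³/3)`, whose inverse Fourier transform is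
`x ↦ exp(cx) Ai(x)`. -/
noncomputable def airyFreq (c s : ℝ) : ℂ := airyPhase 0 ((2 * π * s : ℝ) + c * Complex.I)

lemma continuous_airyFreq (c : ℝ) : Continuous (airyFreq c) :=
  (airyPhase_differentiable 0).continuous.comp (by fun_prop)

lemma integrable_airyFreq {c : ℝ} (hc : 0 < c) : Integrable (airyFreq c) :=
  (integrable_airyPhase 0 hc).comp_mul_left' (R := 2 * π) (by positivity)

lemma exp_mul_Ai_eq_fourierInv {c : ℝ} (hc : 0 < c) (x : ℝ) :
    ((Real.exp (c * x) * Ai x : ℝ) : ℂ) = 𝓕⁻ (airyFreq c) x := by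
  have hsub := Measure.integral_comp_mul_left
    (fun t : ℝ => airyPhase x (t + c * Complex.I)) (2 * π)
  have hpt (s : ℝ) : airyPhase x ((2 * π * s : ℝ) + c * Complex.I) =
      Complex.exp (-(c * x)) *
        (Complex.exp ((↑(2 * π * inner ℝ s x) * Complex.I)) • airyFreq c s) := by
    simp only [airyFreq, airyPhase, smul_eq_mul, ← Complex.exp_add, RCLike.inner_apply,
      conj_trivial]
    congr 1
    push_cast
    linear_combination (x * c : ℂ) * Complex.I_sq
  simp_rw [hpt] at hsub
  rw [integral_const_mul, ← Real.fourierInv_eq' (airyFreq c) x] at hsub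
  have hpi : (0 : ℝ) < (2 * π)⁻¹ := by positivity
  rw [abs_of_pos hpi, Complex.real_smul] at hsub
  have hAi := Ai_eq_integral x hc
  push_cast at hsub ⊢
  rw [hAi, one_div, ← hsub, ← mul_assoc, ← Complex.exp_add]
  simp

lemma abs_Ai_le {c : ℝ} (hc : 0 < c) (x : ℝ) :
    |Ai x| ≤ (∫ s, ‖airyFreq c s‖) * Real.exp (-(c * x)) := by
  have h : ‖𝓕⁻ (airyFreq c) x‖ ≤ ∫ s, ‖airyFreq c s‖ :=
    VectorFourier.norm_fourierIntegral_le_integral_norm _ _ _ _ _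
  rw [← exp_mul_Ai_eq_fourierInv hc, Complex.norm_real, Real.norm_eq_abs, abs_mul, Real.abs_exp]
    at h
  rw [Real.exp_neg, ← div_eq_mul_inv, le_div_iff₀ (Real.exp_pos _), mul_comm]
  exact h

lemma continuous_Ai : Continuous Ai := by
  have h : Continuous (𝓕⁻ (airyFreq 1)) :=
    VectorFourier.fourierIntegral_continuous Real.continuous_fourierChar
      (by simpa using! continuous_inner.neg) (integrable_airyFreq one_pos)
  have h2 : Continuous fun x : ℝ => Real.exp (-x) * (𝓕⁻ (airyFreq 1) x).re := by fun_prop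
  refine h2.congr fun x => ?_
  rw [← exp_mul_Ai_eq_fourierInv one_pos, Complex.ofReal_re, ← mul_assoc, ← Real.exp_add]
  simp

/-- The bound `abs_Ai_le` holds for every exponent; exponent `2c` gives decay at `+∞` and `c/2`
gives decay at `-∞`. -/
lemma integrable_exp_mul_Ai {c : ℝ} (hc : 0 < c) :
    Integrable (fun x : ℝ => Real.exp (c * x) * Ai x) := by
  have hcont : Continuous (fun x : ℝ => Real.exp (c * x) * Ai x) :=
    (by fun_prop : Continuous fun x : ℝ => Real.exp (c * x)).mul continuous_Ai
  rw [← integrableOn_univ, ← Set.Iic_union_Ioi (a := (0 : ℝ)), integrableOn_union]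
  constructor
  · refine ((integrableOn_exp_mul_Iic (a := c / 2) (by positivity) 0).const_mul
      (∫ s, ‖airyFreq (c / 2) s‖)).mono' hcont.aestronglyMeasurable
      (Eventually.of_forall fun x => ?_)
    rw [Real.norm_eq_abs, abs_mul, Real.abs_exp]
    refine (mul_le_mul_of_nonneg_left (abs_Ai_le (half_pos hc) x) (Real.exp_pos _).le).trans_eq ?_
    rw [mul_left_comm, ← Real.exp_add]
    ring_nf
  · refine ((integrableOn_exp_mul_Ioi (a := -c) (by linarith) 0).const_mul
      (∫ s, ‖airyFreq (2 * c) s‖)).mono' hcont.aestronglyMeasurable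
      (Eventually.of_forall fun x => ?_)
    rw [Real.norm_eq_abs, abs_mul, Real.abs_exp]
    refine (mul_le_mul_of_nonneg_left (abs_Ai_le (by positivity : 0 < 2 * c) x)
      (Real.exp_pos _).le).trans_eq ?_
    rw [mul_left_comm, ← Real.exp_add]
    ring_nf

/-! ### Parseval and the Gaussian integral -/

lemma airyFreq_mul_neg (c s : ℝ) :
    airyFreq c (-s) * airyFreq c s =
      Complex.exp (-(8 * π ^ 2 * c : ℝ) * s ^ 2 + (2 * c ^ 3 / 3 : ℝ)) := by
  simp only [airyFreq, airyPhase, ← Complex.exp_add]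
  congr 1
  push_cast
  linear_combination (norm := ring_nf)
    (8 * π ^ 2 * s ^ 2 * c + 2 * (c : ℂ) ^ 3 / 3 * (Complex.I ^ 2 - 1)) * Complex.I_sq

/-- Fubini moves the Fourier transform off one factor, and Fourier inversion evaluates it on the
other, leaving a Gaussian integral. -/
lemma integral_shift_mul {c : ℝ} (hc : 0 < c) (d : ℝ) :
    ∫ u : ℝ, 𝓕⁻ (airyFreq c) (u + d) * 𝓕⁻ (airyFreq c) u =
      ((1 / Real.sqrt (8 * π * c) * Real.exp (-d ^ 2 / (8 * c) + 2 * c ^ 3 / 3) : ℝ) : ℂ) := by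
  have hint : Integrable (𝓕⁻ (airyFreq c)) := by
    have h := (integrable_exp_mul_Ai hc).ofReal (𝕜 := ℂ)
    exact h.congr (Eventually.of_forall fun x => exp_mul_Ai_eq_fourierInv hc x)
  have hint' : Integrable (𝓕 (airyFreq c)) := by
    refine hint.comp_neg.congr (Eventually.of_forall fun x => ?_)
    simp [Real.fourierInv_eq_fourier_neg]
  have hinv : 𝓕 (𝓕⁻ (airyFreq c)) = airyFreq c :=
    (continuous_airyFreq c).fourier_fourierInv_eq (integrable_airyFreq hc) hint'
  -- The shift by `d` becomes a modulation on the frequency side.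
  set k : ℝ → ℂ := fun s => Complex.exp ((-(2 * π * d * s) : ℝ) * Complex.I) * airyFreq c (-s)
    with hk
  have hkint : Integrable k := by
    refine (integrable_airyFreq hc).comp_neg.bdd_mul (c := 1)
      (Continuous.aestronglyMeasurable (by fun_prop)) (Eventually.of_forall fun s => ?_)
    rw [Complex.norm_exp_ofReal_mul_I]
  have hkF (u : ℝ) : 𝓕 k u = 𝓕⁻ (airyFreq c) (u + d) := by
    rw [Real.fourierInv_eq_fourier_comp_neg, Real.fourier_eq', Real.fourier_eq']
    refine integral_congr_ae (Eventually.of_forall fun s => ?_)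
    simp only [hk, smul_eq_mul, ← mul_assoc, ← Complex.exp_add, RCLike.inner_apply, conj_trivial]
    congr 2
    push_cast
    ring
  have hflip : ∫ u, 𝓕 k u • 𝓕⁻ (airyFreq c) u = ∫ s, k s • 𝓕 (𝓕⁻ (airyFreq c)) s := by
    simpa using! (VectorFourier.integral_fourierIntegral_smul_eq_flip (L := innerₗ ℝ)
      Real.continuous_fourierChar continuous_inner hkint hint)
  simp_rw [hkF, hinv, smul_eq_mul] at hflip
  rw [hflip]
  have hpt (s : ℝ) : k s * airyFreq c s =
      Complex.exp ((-(8 * π ^ 2 * c : ℝ) : ℂ) * s ^ 2 + (-(2 * π * d : ℝ) * Complex.I) * s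
        + (2 * c ^ 3 / 3 : ℝ)) := by
    rw [hk, mul_assoc, airyFreq_mul_neg, ← Complex.exp_add]
    congr 1
    push_cast
    ring
  simp_rw [hpt]
  have hpos : 0 < 8 * π ^ 2 * c := by positivity
  rw [integral_cexp_quadratic (by rw [Complex.neg_re, Complex.ofReal_re]; linarith)]
  have hsqrt : ((π : ℂ) / -(-((8 * π ^ 2 * c : ℝ) : ℂ))) ^ (1 / 2 : ℂ) =
      ((1 / Real.sqrt (8 * π * c) : ℝ) : ℂ) := by
    have h1 : (π : ℂ) / -(-((8 * π ^ 2 * c : ℝ) : ℂ)) = (((8 * π * c)⁻¹ : ℝ) : ℂ) := by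
      rw [neg_neg, ← Complex.ofReal_div]
      congr 1
      field_simp
    have h2 : (1 / 2 : ℂ) = ((1 / 2 : ℝ) : ℂ) := by push_cast; rfl
    rw [h1, h2, ← Complex.ofReal_cpow (by positivity), ← Real.sqrt_eq_rpow, Real.sqrt_inv, one_div]
  rw [hsqrt, Complex.ofReal_mul _ (Real.exp _), Complex.ofReal_exp]
  congr 2
  have hπ : (π : ℂ) ≠ 0 := by exact_mod_cast Real.pi_ne_zero
  have hc' : (c : ℂ) ≠ 0 := by exact_mod_cast hc.ne'
  push_cast
  rw [mul_pow, Complex.I_sq]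
  field_simp
  ring

/-- For every `α > 0` and all `x, y ∈ ℝ`, the integral
`∫_{−∞}^{∞} e^{αz} Ai(x+z) Ai(y+z) dz` converges absolutely and equals
`(4πα)^{−1/2}·exp(−(x−y)²/(4α) − α(x+y)/2 + α³/12)`. -/
theorem airy_exp_integral (α x y : ℝ) (hα : 0 < α) :
    MeasureTheory.Integrable (fun z : ℝ => Real.exp (α * z) * Ai (x + z) * Ai (y + z)) ∧
    (∫ z : ℝ, Real.exp (α * z) * Ai (x + z) * Ai (y + z)) =
      (1 / Real.sqrt (4 * Real.pi * α)) *
        Real.exp (-(x - y) ^ 2 / (4 * α) - α * (x + y) / 2 + α ^ 3 / 12) := by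
  have hc : 0 < α / 2 := half_pos hα
  -- Splitting the weight evenly gives the function `u ↦ exp(αu/2) Ai(u)` in both factors.
  have hfac (z : ℝ) : Real.exp (α * z) * Ai (x + z) * Ai (y + z) =
      Real.exp (-(α * (x + y) / 2)) * ((Real.exp (α / 2 * (x + z)) * Ai (x + z)) *
        (Real.exp (α / 2 * (y + z)) * Ai (y + z))) := by
    have : Real.exp (α * z) = Real.exp (-(α * (x + y) / 2)) *
        (Real.exp (α / 2 * (x + z)) * Real.exp (α / 2 * (y + z))) := by
      rw [← Real.exp_add, ← Real.exp_add]
      ring_nf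
    rw [this]
    ring
  simp_rw [hfac]
  constructor
  · refine Integrable.const_mul ?_ _
    refine ((integrable_exp_mul_Ai hc).comp_add_left y).bdd_mul
      (c := ∫ s, ‖airyFreq (α / 2) s‖) ?_ (Eventually.of_forall fun z => ?_)
    · have := continuous_Ai
      exact Continuous.aestronglyMeasurable (by fun_prop)
    · rw [Real.norm_eq_abs, abs_mul, Real.abs_exp]
      refine (mul_le_mul_of_nonneg_left (abs_Ai_le hc (x + z)) (Real.exp_pos _).le).trans_eq ?_
      rw [mul_left_comm, ← Real.exp_add]
      simp
  · rw [integral_const_mul]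
    have hmain := integral_shift_mul hc (x - y)
    simp_rw [← exp_mul_Ai_eq_fourierInv hc, ← Complex.ofReal_mul] at hmain
    rw [integral_complex_ofReal, Complex.ofReal_inj,
      ← integral_add_left_eq_self _ y] at hmain
    have hxy (z : ℝ) : y + z + (x - y) = x + z := by ring
    simp_rw [hxy] at hmain
    rw [hmain, mul_left_comm, ← Real.exp_add]
    have hroot : 8 * π * (α / 2) = 4 * π * α := by ring
    rw [hroot]
    congr 2
    ring
end

section
/- For all M > 0 and λ > 0 there exists a constant C > 0 such that for all reals s ≤ t and all x, y ≥ −M, |∫_0^∞ e^{−z(t−s)} Ai(x+z) Ai(y+z) dz − ∫_0^∞ Ai(x+z) Ai(y+z) dz| ≤ C (t−s) e^{−λ(x+y)}. -/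
/-!
The function `e(z) = exp(i(z³/3 + xz))` is entire, and for `t, b` real
`‖e(t + ib)‖ = exp(-b t² + b³/3 - xb)`. Applying Cauchy's theorem to the rectangle with corners
`0` and `R + ia` (`a > 0`) and taking real parts gives
`∫₀^R cos(t³/3 + xt) dt = Re ∫₀^R e(t + ia) dt + Re (-i ∫₀^a e(R + ib) db)`: the side on the
imaginary axis drops out because `e` is real there. As `R → ∞` the side `Re z = R` vanishes
by dominated convergence, so `π Ai(x) = Re ∫₀^∞ e(t + ia) dt` (`Ai_eq`). The Gaussian bound on
the shifted line yields `|Ai(x)| ≤ K_a exp(-a x)` for *all* real `x` (`abs_Ai_le`), and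
measurability of `Ai` (`measurable_Ai`).

With `a = lam`, the theorem follows from `|exp(-zτ) - 1| ≤ zτ` for `z, τ ≥ 0` and
`|Ai(x+z) Ai(y+z)| ≤ K² exp(-lam (x+y)) exp(-2 lam z)`, since `z exp(-2 lam z)` is integrable
on `(0, ∞)`.
-/

open MeasureTheory Real Filter

/-- The entire function `z ↦ exp(i(z³/3 + xz))` whose real part on the real axis is the
integrand of the Airy integral. -/
noncomputable def airyExp (x : ℝ) (z : ℂ) : ℂ :=
  Complex.exp (Complex.I * (z ^ 3 / 3 + x * z))

lemma airyExp_exponent (x t b : ℝ) :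
    Complex.I * (((t : ℂ) + b * Complex.I) ^ 3 / 3 + x * ((t : ℂ) + b * Complex.I)) =
      ((-b * t ^ 2 + b ^ 3 / 3 - x * b : ℝ) : ℂ) +
        ((t ^ 3 / 3 - b ^ 2 * t + x * t : ℝ) : ℂ) * Complex.I := by
  apply Complex.ext <;> simp [pow_succ] <;> ring

lemma norm_airyExp (x t b : ℝ) :
    ‖airyExp x ((t : ℂ) + b * Complex.I)‖ = Real.exp (-b * t ^ 2 + b ^ 3 / 3 - x * b) := by
  rw [airyExp, airyExp_exponent, Complex.norm_exp]
  congr 1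
  simp only [Complex.add_re, Complex.ofReal_re, Complex.re_ofReal_mul, Complex.I_re, mul_zero,
    add_zero]

lemma airyExp_re_real (x t : ℝ) :
    (airyExp x ((t : ℂ) + ((0 : ℝ) : ℂ) * Complex.I)).re = Real.cos (t ^ 3 / 3 + x * t) := by
  rw [airyExp, airyExp_exponent, Complex.exp_re]
  simp only [Complex.add_re, Complex.add_im, Complex.ofReal_re, Complex.ofReal_im,
    Complex.re_ofReal_mul, Complex.im_ofReal_mul, Complex.I_re, Complex.I_im]
  simp

lemma airyExp_imaginary_axis (x b : ℝ) :
    airyExp x (((0 : ℝ) : ℂ) + b * Complex.I) = ((Real.exp (b ^ 3 / 3 - x * b) : ℝ) : ℂ) := by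
  rw [airyExp, airyExp_exponent, Complex.ofReal_exp]
  congr 1
  simp

@[fun_prop]
lemma continuous_airyExp (x : ℝ) : Continuous (airyExp x) := by
  unfold airyExp; fun_prop

/-- Real part of Cauchy's theorem on the rectangle with corners `0` and `R + ia`. -/
lemma airy_contour (a x R : ℝ) :
    ∫ t in (0:ℝ)..R, Real.cos (t ^ 3 / 3 + x * t) =
      (∫ t in (0:ℝ)..R, airyExp x (t + a * Complex.I)).re -
        (Complex.I * ∫ b in (0:ℝ)..a, airyExp x (R + b * Complex.I)).re := by
  have h := Complex.integral_boundary_rect_eq_zero_of_differentiableOn (airyExp x)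
    (⟨0, 0⟩ : ℂ) ⟨R, a⟩ (by unfold airyExp; fun_prop)
  simp only [smul_eq_mul] at h
  have h0 : (∫ b in (0:ℝ)..a, airyExp x (((0 : ℝ) : ℂ) + b * Complex.I)) =
      ((∫ b in (0:ℝ)..a, Real.exp (b ^ 3 / 3 - x * b) : ℝ) : ℂ) := by
    simp only [airyExp_imaginary_axis]
    exact intervalIntegral.integral_ofReal
  have h1 : (∫ t in (0:ℝ)..R, airyExp x (t + ((0 : ℝ) : ℂ) * Complex.I)).re =
      ∫ t in (0:ℝ)..R, Real.cos (t ^ 3 / 3 + x * t) := by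
    have := Complex.reCLM.intervalIntegral_comp_comm (μ := volume) (a := 0) (b := R)
      (f := fun t : ℝ => airyExp x (t + ((0 : ℝ) : ℂ) * Complex.I))
      (Continuous.intervalIntegrable (by fun_prop) _ _)
    simp only [Complex.reCLM_apply, airyExp_re_real] at this
    exact this.symm
  rw [h0] at h
  have h2 := congrArg Complex.re h
  simp only [Complex.sub_re, Complex.add_re, Complex.zero_re, h1] at h2
  have h3 (r : ℝ) : (Complex.I * (r : ℂ)).re = 0 := by simp
  rw [h3] at h2
  linarith

lemma tendsto_airy_vertical {a : ℝ} (ha : 0 < a) (x : ℝ) :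
    Tendsto (fun R : ℝ => ∫ b in (0:ℝ)..a, airyExp x (R + b * Complex.I)) atTop (nhds 0) := by
  have := intervalIntegral.tendsto_integral_filter_of_dominated_convergence
    (μ := volume) (a := 0) (b := a) (l := (atTop : Filter ℝ))
    (F := fun (R : ℝ) (b : ℝ) => airyExp x (R + b * Complex.I)) (f := fun _ => 0)
    (fun _ => Real.exp (a ^ 3 / 3 + |x| * a)) ?_ ?_ ?_ ?_
  · simpa using this
  · exact .of_forall fun R => Continuous.aestronglyMeasurable (by fun_prop)
  · refine .of_forall fun R => .of_forall fun b hb => ?_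
    rw [Set.uIoc_of_le ha.le] at hb
    rw [norm_airyExp]
    apply Real.exp_le_exp.2
    have h1 : b ^ 3 ≤ a ^ 3 := pow_le_pow_left₀ hb.1.le hb.2 3
    have h2 : -x * b ≤ |x| * a :=
      mul_le_mul (neg_le_abs x) hb.2 hb.1.le (abs_nonneg x)
    have h3 : 0 ≤ b * R ^ 2 := mul_nonneg hb.1.le (sq_nonneg R)
    linarith
  · exact intervalIntegrable_const
  · refine .of_forall fun b hb => ?_
    rw [Set.uIoc_of_le ha.le] at hb
    rw [tendsto_zero_iff_norm_tendsto_zero]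
    simp only [norm_airyExp]
    refine Real.tendsto_exp_atBot.comp ?_
    have h : Tendsto (fun R : ℝ => -b * R ^ 2) atTop atBot :=
      (tendsto_pow_atTop (by norm_num : (2 : ℕ) ≠ 0)).const_mul_atTop_of_neg (by linarith [hb.1])
    refine (tendsto_atBot_add_const_right _ (b ^ 3 / 3 - x * b) h).congr fun R => by ring

lemma norm_airyExp_shift (a x t : ℝ) :
    ‖airyExp x ((t : ℂ) + a * Complex.I)‖ =
      Real.exp (a ^ 3 / 3 - a * x) * Real.exp (-a * t ^ 2) := by
  rw [norm_airyExp, ← Real.exp_add]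
  congr 1
  ring

lemma integrable_airyExp_shift {a : ℝ} (ha : 0 < a) (x : ℝ) :
    Integrable (fun t : ℝ => airyExp x (t + a * Complex.I)) := by
  refine ((integrable_exp_neg_mul_sq ha).const_mul (Real.exp (a ^ 3 / 3 - a * x))).mono'
    (Continuous.aestronglyMeasurable (by fun_prop)) (.of_forall fun t => ?_)
  rw [norm_airyExp_shift]

/-- The absolutely convergent representation of `Ai` on the line `Im z = a`. -/
lemma Ai_eq {a : ℝ} (ha : 0 < a) (x : ℝ) :
    Ai x = (1 / Real.pi) * (∫ t in Set.Ioi (0:ℝ), airyExp x (t + a * Complex.I)).re := by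
  rw [Ai]
  congr 1
  apply Tendsto.limUnder_eq
  simp only [airy_contour a x]
  have h1 := intervalIntegral_tendsto_integral_Ioi 0
    (integrable_airyExp_shift ha x).integrableOn tendsto_id
  have h2 := ((tendsto_airy_vertical ha x).const_mul Complex.I)
  have h3 := ((Complex.continuous_re.tendsto _).comp h1).sub
    ((Complex.continuous_re.tendsto _).comp h2)
  simpa [Function.comp_def] using h3

/-- `Ai` decays faster than any exponential at `+∞`; the bound holds on the whole line. -/
lemma abs_Ai_le_s2 {a : ℝ} (ha : 0 < a) :
    ∃ K : ℝ, 0 < K ∧ ∀ x, |Ai x| ≤ K * Real.exp (-a * x) := by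
  set G := ∫ t in Set.Ioi (0:ℝ), Real.exp (-a * t ^ 2) with hG
  have hG0 : 0 ≤ G := integral_nonneg fun t => (Real.exp_pos _).le
  refine ⟨1 / Real.pi * (Real.exp (a ^ 3 / 3) * (G + 1)), by positivity, fun x => ?_⟩
  rw [Ai_eq ha, abs_mul, abs_of_pos (by positivity : 0 < 1 / Real.pi), mul_assoc]
  gcongr
  calc |(∫ t in Set.Ioi (0:ℝ), airyExp x (t + a * Complex.I)).re|
      ≤ ‖∫ t in Set.Ioi (0:ℝ), airyExp x (t + a * Complex.I)‖ := Complex.abs_re_le_norm _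
    _ ≤ ∫ t in Set.Ioi (0:ℝ), ‖airyExp x (t + a * Complex.I)‖ := norm_integral_le_integral_norm _
    _ = Real.exp (a ^ 3 / 3) * Real.exp (-a * x) * G := by
        simp only [norm_airyExp_shift]
        rw [integral_const_mul, ← Real.exp_add]
        congr 2
        ring
    _ ≤ Real.exp (a ^ 3 / 3) * (G + 1) * Real.exp (-a * x) := by
        have : 0 < Real.exp (a ^ 3 / 3) * Real.exp (-a * x) := by positivity
        nlinarith

lemma measurable_Ai : Measurable Ai := by
  have h : StronglyMeasurable
      (fun x : ℝ => ∫ t in Set.Ioi (0:ℝ), airyExp x (t + (1:ℝ) * Complex.I)) := by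
    apply StronglyMeasurable.integral_prod_right
      (f := fun (x t : ℝ) => airyExp x (t + (1:ℝ) * Complex.I))
    apply Continuous.stronglyMeasurable
    unfold airyExp Function.uncurry
    fun_prop
  have h2 : Ai = fun x : ℝ => (1 / Real.pi) *
      (∫ t in Set.Ioi (0:ℝ), airyExp x (t + (1:ℝ) * Complex.I)).re :=
    funext fun x => Ai_eq one_pos x
  rw [h2]
  exact (Complex.measurable_re.comp h.measurable).const_mul _

lemma integrableOn_mul_exp_neg {c : ℝ} (hc : 0 < c) :
    IntegrableOn (fun z : ℝ => z * Real.exp (-c * z)) (Set.Ioi 0) := by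
  have := integrableOn_rpow_mul_exp_neg_mul_rpow (p := 1) (s := 1) (b := c)
    (by norm_num) (by norm_num) hc
  simpa using this

/-- For all `M > 0` and `λ > 0` there exists `C > 0` such that for all reals `s ≤ t`
and all `x, y ≥ −M`,
`|∫_0^∞ e^{−z(t−s)} Ai(x+z) Ai(y+z) dz − ∫_0^∞ Ai(x+z) Ai(y+z) dz| ≤ C (t−s) e^{−λ(x+y)}`. -/
theorem airy_kernel_exp_approx (M lam : ℝ) (hM : 0 < M) (hlam : 0 < lam) :
    ∃ C > 0, ∀ s t x y : ℝ, s ≤ t → -M ≤ x → -M ≤ y →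
      |(∫ z in Set.Ioi (0:ℝ), Real.exp (-z * (t - s)) * Ai (x + z) * Ai (y + z)) -
          ∫ z in Set.Ioi (0:ℝ), Ai (x + z) * Ai (y + z)| ≤
        C * (t - s) * Real.exp (-lam * (x + y)) := by
  obtain ⟨K, hK, hAi⟩ := abs_Ai_le_s2 hlam
  set J := ∫ z in Set.Ioi (0:ℝ), z * Real.exp (-(2 * lam) * z) with hJ
  have hJ0 : 0 ≤ J := setIntegral_nonneg measurableSet_Ioi fun z hz =>
    mul_nonneg (Set.mem_Ioi.1 hz).le (Real.exp_pos _).le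
  refine ⟨K ^ 2 * (J + 1), by positivity, fun s t x y hst _ _ => ?_⟩
  have hprod (z : ℝ) : |Ai (x + z) * Ai (y + z)| ≤
      K ^ 2 * Real.exp (-lam * (x + y)) * Real.exp (-(2 * lam) * z) := by
    rw [abs_mul]
    refine (mul_le_mul (hAi _) (hAi _) (abs_nonneg _) (by positivity)).trans_eq ?_
    rw [mul_mul_mul_comm, ← Real.exp_add, mul_assoc (K ^ 2), ← Real.exp_add, ← sq]
    congr 2
    ring
  have hmeas : Measurable fun z => Ai (x + z) * Ai (y + z) :=
    (measurable_Ai.comp (measurable_const_add x)).mul (measurable_Ai.comp (measurable_const_add y))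
  have hIntegrable : IntegrableOn (fun z => Ai (x + z) * Ai (y + z)) (Set.Ioi 0) :=
    ((integrableOn_exp_mul_Ioi (by linarith : -(2 * lam) < 0) 0).const_mul
      (K ^ 2 * Real.exp (-lam * (x + y)))).mono' hmeas.aestronglyMeasurable (.of_forall hprod)
  have hIntegrableExp : IntegrableOn (fun z => Real.exp (-z * (t - s)) * Ai (x + z) * Ai (y + z))
      (Set.Ioi 0) := by
    refine hIntegrable.norm.mono' ?_ ?_
    · simp only [mul_assoc]
      exact ((by fun_prop : Measurable fun z : ℝ => Real.exp (-z * (t - s))).mul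
        hmeas).aestronglyMeasurable
    · filter_upwards [ae_restrict_mem measurableSet_Ioi] with z hz
      rw [mul_assoc, norm_mul, Real.norm_of_nonneg (Real.exp_pos _).le]
      refine mul_le_of_le_one_left (norm_nonneg _) (Real.exp_le_one_iff.2 ?_)
      nlinarith [Set.mem_Ioi.1 hz]
  rw [← integral_sub hIntegrableExp hIntegrable]
  calc |∫ z in Set.Ioi (0:ℝ), (Real.exp (-z * (t - s)) * Ai (x + z) * Ai (y + z) -
          Ai (x + z) * Ai (y + z))|
      ≤ ∫ z in Set.Ioi (0:ℝ), K ^ 2 * Real.exp (-lam * (x + y)) * (t - s) *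
          (z * Real.exp (-(2 * lam) * z)) := by
        rw [← Real.norm_eq_abs]
        refine norm_integral_le_of_norm_le
          ((integrableOn_mul_exp_neg (by linarith : 0 < 2 * lam)).const_mul _) ?_
        filter_upwards [ae_restrict_mem measurableSet_Ioi] with z hz
        have hz0 : 0 ≤ z * (t - s) := mul_nonneg (Set.mem_Ioi.1 hz).le (by linarith)
        have hexp : |Real.exp (-z * (t - s)) - 1| ≤ z * (t - s) := by
          rw [abs_le]
          constructor
          · linarith [Real.add_one_le_exp (-z * (t - s))]
          · linarith [Real.exp_le_one_iff.2 (by linarith : -z * (t - s) ≤ 0)]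
        rw [mul_assoc, ← sub_one_mul, Real.norm_eq_abs, abs_mul]
        refine (mul_le_mul hexp (hprod z) (abs_nonneg _) hz0).trans_eq ?_
        ring
    _ = K ^ 2 * Real.exp (-lam * (x + y)) * (t - s) * J := by rw [integral_const_mul]
    _ ≤ K ^ 2 * (J + 1) * (t - s) * Real.exp (-lam * (x + y)) := by
        have : 0 ≤ K ^ 2 * Real.exp (-lam * (x + y)) * (t - s) :=
          mul_nonneg (by positivity) (by linarith)
        linarith
end

section
/- Let f : ℝ → ℝ be continuously differentiable with |f(x)| ≤ C₀ e^{−x} and |f′(x)| ≤ C₀ e^{−x} for all x ∈ ℝ. Then for all reals P and p there is a constant K > 0, depending only on C₀ and p, such that for every ε ∈ (0,1], |∫_P^∞ (4πε)^{−1/2} e^{−(x−p)²/(4ε)} f(x) dx − f(p) · ∫_{(P−p)/√ε}^∞ (4π)^{−1/2} e^{−x²/4} dx| ≤ K √ε. -/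
/-!
After the substitution `x = p + √ε y`, both terms are integrals over the same half-line
`y > (P - p) / √ε` against the Gaussian density `(4π)^{-1/2} e^{-y²/4}`, of `f (p + √ε y)` and of
`f p` (`integral_Ioi_rescale`). The mean value theorem gives
`|f (p + h) - f p| ≤ C₀ e^{-p} |h| e^{|h|}` (`abs_sub_le_of_deriv_exp_bound`). For `h = √ε y` with
`ε ≤ 1` this is at most `√ε · C₀ e^{-p} |y| e^{|y|}`, and the factor `|y| e^{|y|}` is integrable
against the Gaussian: `|y| e^{|y|} e^{-y²/4} ≤ e⁸ e^{-y²/8}` (`abs_mul_exp_mul_gaussian_le`).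
Integrating the dominating Gaussian over all of `ℝ` yields a constant independent of `P`.
-/

open MeasureTheory Real Filter

lemma abs_sub_le_of_deriv_exp_bound {C₀ : ℝ} {f : ℝ → ℝ} (hf : Differentiable ℝ f)
    (hf' : ∀ x, |deriv f x| ≤ C₀ * exp (-x)) (hC₀ : 0 < C₀) (p h : ℝ) :
    |f (p + h) - f p| ≤ C₀ * exp (-p) * (|h| * exp |h|) := by
  have key := (convex_uIcc p (p + h)).norm_image_sub_le_of_norm_deriv_le (𝕜 := ℝ) (f := f)
    (C := C₀ * exp (-p) * exp |h|) (fun x _ => hf x) (fun x hx => ?_)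
    Set.left_mem_uIcc Set.right_mem_uIcc
  · simp only [norm_eq_abs, add_sub_cancel_left] at key
    linarith
  · have hx' := Set.abs_sub_left_of_mem_uIcc hx
    rw [add_sub_cancel_left] at hx'
    rw [norm_eq_abs, mul_assoc, ← exp_add]
    refine (hf' x).trans ?_
    gcongr
    linarith [neg_abs_le (x - p)]

/-- The comparison uses `|y| ≤ e^{|y|}` and `2|y| ≤ y²/8 + 8`. -/
lemma abs_mul_exp_mul_gaussian_le (y : ℝ) :
    exp (-y ^ 2 / 4) * (|y| * exp |y|) ≤ exp 8 * exp (-(1 / 8) * y ^ 2) := by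
  have h1 : |y| ≤ exp |y| := by linarith [add_one_le_exp |y|]
  calc exp (-y ^ 2 / 4) * (|y| * exp |y|)
      ≤ exp (-y ^ 2 / 4) * (exp |y| * exp |y|) := by gcongr
    _ = exp (-y ^ 2 / 4 + (|y| + |y|)) := by rw [exp_add, exp_add]
    _ ≤ exp (8 + -(1 / 8) * y ^ 2) := by
        apply exp_le_exp.2
        nlinarith [sq_nonneg (|y| - 8), sq_abs y]
    _ = _ := exp_add _ _

lemma integral_Ioi_rescale (f : ℝ → ℝ) (p P : ℝ) {ε : ℝ} (hε : 0 < ε) :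
    ∫ x in Set.Ioi P, (1 / √(4 * π * ε)) * exp (-(x - p) ^ 2 / (4 * ε)) * f x =
      ∫ y in Set.Ioi ((P - p) / √ε),
        (1 / √(4 * π)) * exp (-y ^ 2 / 4) * f (p + √ε * y) := by
  have hs : 0 < √ε := sqrt_pos.2 hε
  have himg : (fun y => p + √ε * y) '' Set.Ioi ((P - p) / √ε) = Set.Ioi P := by
    ext x
    constructor
    · rintro ⟨y, hy, rfl⟩
      have := (div_lt_iff₀ hs).1 hy
      simp only [Set.mem_Ioi]
      linarith
    · intro hx
      refine ⟨(x - p) / √ε, ?_, ?_⟩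
      · simp only [Set.mem_Ioi] at hx ⊢
        gcongr
      · field_simp
        ring
  rw [← himg, integral_image_eq_integral_abs_deriv_smul (f' := fun _ => √ε) measurableSet_Ioi]
  · refine integral_congr_ae (ae_of_all _ fun y => ?_)
    have h2 : -(p + √ε * y - p) ^ 2 / (4 * ε) = -y ^ 2 / 4 := by
      rw [add_sub_cancel_left, mul_pow, sq_sqrt hε.le]
      field_simp
    simp only [h2, abs_of_pos hs, smul_eq_mul]
    rw [sqrt_mul (by positivity) ε]
    field_simp
  · intro y _
    simpa using (((hasDerivAt_id y).const_mul (√ε)).const_add p).hasDerivWithinAt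
  · intro a _ b _ hab
    simpa [hs.ne'] using hab

/-- Let `f : ℝ → ℝ` be continuously differentiable with `|f(x)| ≤ C₀ e^{−x}` and
`|f′(x)| ≤ C₀ e^{−x}` for all `x`. Then for all reals `P` and `p` there is `K > 0`,
depending only on `C₀` and `p`, such that for every `ε ∈ (0,1]`,
`|∫_P^∞ (4πε)^{−1/2} e^{−(x−p)²/(4ε)} f(x) dx
  − f(p)·∫_{(P−p)/√ε}^∞ (4π)^{−1/2} e^{−x²/4} dx| ≤ K √ε`. -/
theorem gaussian_halfline_approx (C₀ : ℝ) (hC₀ : 0 < C₀) (p : ℝ) :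
    ∃ K > 0, ∀ f : ℝ → ℝ, ContDiff ℝ 1 f →
      (∀ x, |f x| ≤ C₀ * Real.exp (-x)) →
      (∀ x, |deriv f x| ≤ C₀ * Real.exp (-x)) →
      ∀ P ε : ℝ, 0 < ε → ε ≤ 1 →
      |(∫ x in Set.Ioi P,
            (1 / Real.sqrt (4 * Real.pi * ε)) * Real.exp (-(x - p) ^ 2 / (4 * ε)) * f x) -
          f p * ∫ x in Set.Ioi ((P - p) / Real.sqrt ε),
            (1 / Real.sqrt (4 * Real.pi)) * Real.exp (-x ^ 2 / 4)| ≤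
        K * Real.sqrt ε := by
  have hG : Integrable fun y : ℝ => exp (-(1 / 8) * y ^ 2) :=
    integrable_exp_neg_mul_sq (by norm_num)
  set B : ℝ := 1 / √(4 * π) * (C₀ * exp (-p)) * exp 8 with hB
  have hBpos : 0 < B := by positivity
  have hI : 0 ≤ ∫ y : ℝ, exp (-(1 / 8) * y ^ 2) := integral_nonneg fun _ => (exp_pos _).le
  -- Adding `1` makes positivity of the constant immediate.
  refine ⟨B * (∫ y : ℝ, exp (-(1 / 8) * y ^ 2)) + 1, by positivity, ?_⟩
  intro f hf _ hf' P ε hε hε1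
  have hs : 0 < √ε := sqrt_pos.2 hε
  have hs1 : √ε ≤ 1 := sqrt_le_one.2 hε1
  have hdiff : Differentiable ℝ f := hf.differentiable one_ne_zero
  have hcont : Continuous f := hf.continuous
  have hbound : ∀ y : ℝ, ‖1 / √(4 * π) * exp (-y ^ 2 / 4) * (f (p + √ε * y) - f p)‖ ≤
      √ε * B * exp (-(1 / 8) * y ^ 2) := by
    intro y
    have h1 := abs_sub_le_of_deriv_exp_bound hdiff hf' hC₀ p (√ε * y)
    rw [abs_mul, abs_of_pos hs] at h1
    have h2 : √ε * |y| ≤ |y| := mul_le_of_le_one_left (abs_nonneg y) hs1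
    rw [norm_mul, norm_of_nonneg (by positivity), norm_eq_abs]
    calc 1 / √(4 * π) * exp (-y ^ 2 / 4) * |f (p + √ε * y) - f p|
        ≤ 1 / √(4 * π) * exp (-y ^ 2 / 4) *
            (C₀ * exp (-p) * (√ε * |y| * exp (√ε * |y|))) := by gcongr
      _ ≤ 1 / √(4 * π) * exp (-y ^ 2 / 4) *
            (C₀ * exp (-p) * (√ε * |y| * exp |y|)) := by gcongr
      _ = √ε * (1 / √(4 * π) * (C₀ * exp (-p))) *
            (exp (-y ^ 2 / 4) * (|y| * exp |y|)) := by ring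
      _ ≤ √ε * (1 / √(4 * π) * (C₀ * exp (-p))) *
            (exp 8 * exp (-(1 / 8) * y ^ 2)) :=
          mul_le_mul_of_nonneg_left (abs_mul_exp_mul_gaussian_le y) (by positivity)
      _ = √ε * B * exp (-(1 / 8) * y ^ 2) := by rw [hB]; ring
  have hD : Integrable fun y : ℝ =>
      1 / √(4 * π) * exp (-y ^ 2 / 4) * (f (p + √ε * y) - f p) :=
    (hG.const_mul (√ε * B)).mono' (by fun_prop) (ae_of_all _ hbound)
  have hE : Integrable fun y : ℝ => f p * (1 / √(4 * π) * exp (-y ^ 2 / 4)) := by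
    refine Integrable.const_mul (Integrable.const_mul ?_ _) _
    convert integrable_exp_neg_mul_sq (b := 1 / 4) (by norm_num) using 3
    ring
  rw [integral_Ioi_rescale f p P hε, ← integral_const_mul]
  have hsplit : ∫ y in Set.Ioi ((P - p) / √ε),
        (1 / √(4 * π)) * exp (-y ^ 2 / 4) * f (p + √ε * y) =
      (∫ y in Set.Ioi ((P - p) / √ε),
        1 / √(4 * π) * exp (-y ^ 2 / 4) * (f (p + √ε * y) - f p)) +
      ∫ y in Set.Ioi ((P - p) / √ε), f p * (1 / √(4 * π) * exp (-y ^ 2 / 4)) := by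
    rw [← integral_add hD.integrableOn hE.integrableOn]
    refine integral_congr_ae (ae_of_all _ fun y => ?_)
    ring
  rw [hsplit, add_sub_cancel_right, ← norm_eq_abs]
  calc _ ≤ ∫ y in Set.Ioi ((P - p) / √ε), √ε * B * exp (-(1 / 8) * y ^ 2) :=
        norm_integral_le_of_norm_le (hG.const_mul _).integrableOn (ae_of_all _ hbound)
    _ ≤ ∫ y : ℝ, √ε * B * exp (-(1 / 8) * y ^ 2) :=
        setIntegral_le_integral (hG.const_mul _) (ae_of_all _ fun y => by positivity)
    _ = B * (∫ y : ℝ, exp (-(1 / 8) * y ^ 2)) * √ε := by rw [integral_const_mul]; ring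
    _ ≤ (B * (∫ y : ℝ, exp (-(1 / 8) * y ^ 2)) + 1) * √ε := by
        gcongr
        linarith
end

section
/- Fix α ∈ (0,1), s > 0 and γ ∈ (0, 2/3), and set d = α^{1/3}(1+α)^{1/3}/(1−α) and μ = 2α/(1−α). There exists a constant C > 0 such that for every integer N ≥ 2 for which L := (1+α)(1−α)^{−1} d^{−1} s N^{γ} is a positive integer, and for all integers x, y, the quantity φ_N(x,y) := (1/2π) ∫_{−π}^{π} cos((y−x)θ) · (1−α)^{2L} (1 + α² − 2α cos θ)^{−L} dθ satisfies, with x′ = (x − μN)/(d N^{1/3}) and y′ = (y − μN)/(d N^{1/3}): |φ_N(x,y) − (d N^{1/3})^{−1} (4πs N^{γ−2/3})^{−1/2} exp(−(x′−y′)²/(4 s N^{γ−2/3}))| ≤ C N^{−3γ/2}, and moreover, whenever x′ ≠ y′, this difference is also at most C N^{−1/3−γ} / |x′ − y′|. -/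
open MeasureTheory Real Filter

/-!
With `a = α / (1 - α)²` and `k = y - x`, the transition function is the Fourier coefficient
`(2π)⁻¹ ∫_{-π}^{π} cos(kθ) p(θ)^L dθ` of the `L`-th power of `p(θ) = (1 + 2a(1 - cos θ))⁻¹`.
Since `d³ = α(1 + α)/(1 - α)³`, one has `a L = d² s N^γ`, so the Gaussian kernel of the theorem is
exactly `(2π)⁻¹ ∫_ℝ cos(kθ) e^{-aLθ²} dθ`.

The functions `p(θ)` and `q(θ) = e^{-aθ²}` differ by `O(θ⁴)`, and both are at most `e^{-cθ²}` on
`[-π, π]` for some `c > 0`. Hence `|p^L - q^L| = O(L θ⁴ e^{-cLθ²})`, and similarly the derivatives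
differ by `O((L|θ|³ + L²|θ|⁵) e^{-cLθ²})`. Outside `(-π, π]`, where `p^L` is replaced by `0`, the
same bounds hold because `|θ| ≥ 1` (`exists_weight_bound`, `exists_deriv_bound`). The substitution
`t = √L θ` (`abs_integral_sub_le`) gives `L^{-3/2}` for the difference of the two integrals. For the
bound with the factor `|k|⁻¹`, both integrals are first integrated by parts: the boundary terms
vanish since `sin(kπ) = 0`, and the difference of the derivatives integrates to `O(L⁻¹)`
(`exists_fourier_bound`). It remains to rewrite powers of `L` as powers of `N`.
-/

/-! ### The symbol and its Gaussian approximation -/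

/-- The function `p(θ) = (1 + 2a(1 - cos θ))⁻¹`. For `a = α / (1 - α)²` it equals
`(1 - α)² / (1 + α² - 2α cos θ)`, so its `L`-th power is the weight in the transition function. -/
noncomputable def pngSymbol (a θ : ℝ) : ℝ := (1 + 2 * a * (1 - cos θ))⁻¹

/-- The envelope `(|t|³ + |t|⁴ + |t|⁵) e^{-ct²}` dominating all rescaled errors. -/
noncomputable def pngEnvelope (c t : ℝ) : ℝ := (|t| ^ 3 + |t| ^ 4 + |t| ^ 5) * exp (-c * t ^ 2)

lemma pngSymbol_pos {a : ℝ} (ha : 0 < a) (θ : ℝ) : 0 < pngSymbol a θ := by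
  have := cos_le_one θ
  unfold pngSymbol
  have : 0 ≤ a * (1 - cos θ) := mul_nonneg ha.le (by linarith)
  apply inv_pos.2; linarith

lemma abs_one_sub_cos_sub_le (θ : ℝ) : |1 - cos θ - θ ^ 2 / 2| ≤ θ ^ 4 := by
  rcases le_total |θ| 1 with h | h
  · have := cos_bound h
    have e : |θ| ^ 4 = θ ^ 4 := Even.pow_abs (by decide) θ
    rw [abs_sub_comm, e] at this
    have h4 : 0 ≤ θ ^ 4 := by positivity
    calc _ = |1 - θ ^ 2 / 2 - cos θ| := by congr 1; ring
      _ ≤ _ := this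
      _ ≤ _ := by linarith
  · have h1 := one_sub_sq_div_two_le_cos (x := θ)
    have h2 := cos_le_one θ
    have h3 : 1 ≤ θ ^ 2 := (one_le_sq_iff_one_le_abs θ).2 h
    rw [abs_le]; constructor <;> nlinarith

lemma abs_sin_sub_le (θ : ℝ) : |sin θ - θ| ≤ 2 * |θ| ^ 3 := by
  rcases le_total |θ| 1 with h | h
  · have := sin_bound h
    have h0 := abs_nonneg θ
    have h5 : |θ| ^ 5 ≤ |θ| ^ 3 := pow_le_pow_of_le_one h0 h (by norm_num)
    calc |sin θ - θ| = |(sin θ - (θ - θ ^ 3 / 6)) + (- (θ ^ 3 / 6))| := by congr 1; ring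
      _ ≤ _ := abs_add_le _ _
      _ = |sin θ - (θ - θ ^ 3 / 6)| + |θ| ^ 3 / 6 := by
        rw [abs_neg, abs_div, abs_pow]; norm_num
      _ ≤ _ := by nlinarith [pow_nonneg h0 3]
  · have h1 := abs_sin_le_abs (x := θ)
    have h2 : |θ| ≤ |θ| ^ 3 := le_self_pow₀ h (by norm_num)
    have := abs_sub (sin θ) θ
    linarith

/-- `p(θ)` and `e^{-aθ²}` agree up to fourth order: with `u = 2a(1 - cos θ)` and `t = aθ²`, both
`(1 + u)⁻¹ - (1 - u)` and `e^{-t} - (1 - t)` lie in `[0, t²]`, and `0 ≤ t - u ≤ 2aθ⁴`. -/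
lemma abs_pngSymbol_sub_exp_le {a : ℝ} (ha : 0 < a) (θ : ℝ) :
    |pngSymbol a θ - exp (-a * θ ^ 2)| ≤ (2 * a + 2 * a ^ 2) * θ ^ 4 := by
  have h1 := one_sub_sq_div_two_le_cos (x := θ)
  have h2 := cos_le_one θ
  have h3 := abs_le.1 (abs_one_sub_cos_sub_le θ)
  obtain ⟨u, hu⟩ : ∃ u, u = 2 * a * (1 - cos θ) := ⟨_, rfl⟩
  obtain ⟨t, ht⟩ : ∃ t, t = a * θ ^ 2 := ⟨_, rfl⟩
  have hu0 : 0 ≤ u := by rw [hu]; exact mul_nonneg (by linarith) (by linarith)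
  have hut : u ≤ t := by rw [hu, ht]; nlinarith
  have htu : t - u ≤ 2 * a * θ ^ 4 := by rw [hu, ht]; nlinarith
  have ht2 : t ^ 2 = a ^ 2 * θ ^ 4 := by rw [ht]; ring
  have hp : pngSymbol a θ = (1 + u)⁻¹ := by rw [hu]; rfl
  have key : ∀ v : ℝ, 0 ≤ v → 1 - v ≤ (1 + v)⁻¹ ∧ (1 + v)⁻¹ ≤ 1 - v + v ^ 2 := by
    intro v hv
    have hv1 : 0 < 1 + v := by linarith
    constructor
    · rw [← one_div, le_div_iff₀ hv1]; nlinarith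
    · rw [← one_div, div_le_iff₀ hv1]; nlinarith [pow_nonneg hv 3]
  have e1 : exp (-a * θ ^ 2) ≤ (1 + t)⁻¹ := by
    rw [show -a * θ ^ 2 = -t by rw [ht]; ring, exp_neg]
    apply inv_anti₀ (by linarith)
    linarith [add_one_le_exp t]
  have e2 : 1 - t ≤ exp (-a * θ ^ 2) := by
    rw [show -a * θ ^ 2 = -t by rw [ht]; ring]
    linarith [add_one_le_exp (-t)]
  have k1 := key u hu0
  have k2 := key t (hu0.trans hut)
  have : u ^ 2 ≤ t ^ 2 := by gcongr
  have : 0 ≤ a ^ 2 * θ ^ 4 := by positivity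
  have : 0 ≤ a * θ ^ 4 := by positivity
  rw [hp, abs_le]
  constructor <;> linarith

/-- A rate `c` for which both `p(θ)` and `e^{-aθ²}` are at most `e^{-cθ²}` on `[-π, π]`. It comes
from `1 - cos θ ≥ 2θ²/π²` and `(1 + v)⁻¹ ≤ e^{-v/(1 + 4a)}` for `0 ≤ v ≤ 4a`. -/
noncomputable def pngRate (a : ℝ) : ℝ := (4 * a / π ^ 2) / (1 + 4 * a)

lemma pngRate_pos {a : ℝ} (ha : 0 < a) : 0 < pngRate a := by
  unfold pngRate; have := pi_pos; positivity

lemma pngRate_le {a : ℝ} (ha : 0 < a) : pngRate a ≤ a := by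
  unfold pngRate
  have h := pi_gt_three
  rw [div_div, div_le_iff₀ (by positivity)]
  have : 4 ≤ π ^ 2 * (1 + 4 * a) := by nlinarith
  nlinarith

lemma pngSymbol_le_exp {a : ℝ} (ha : 0 < a) {θ : ℝ} (hθ : |θ| ≤ π) :
    pngSymbol a θ ≤ exp (-pngRate a * θ ^ 2) := by
  have h := cos_le_one_sub_mul_cos_sq hθ
  have hpi := pi_pos
  obtain ⟨v, hv⟩ : ∃ v, v = 4 * a / π ^ 2 * θ ^ 2 := ⟨_, rfl⟩
  have hv0 : 0 ≤ v := by rw [hv]; positivity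
  have hv4 : v ≤ 4 * a := by
    have : θ ^ 2 ≤ π ^ 2 := sq_le_sq' (abs_le.1 hθ).1 (abs_le.1 hθ).2
    rw [hv, div_mul_eq_mul_div, div_le_iff₀ (by positivity)]; gcongr
  have h1 : pngSymbol a θ ≤ (1 + v)⁻¹ := by
    unfold pngSymbol
    apply inv_anti₀ (by linarith)
    have : v = 2 * a * (2 / π ^ 2 * θ ^ 2) := by rw [hv]; ring
    rw [this]
    gcongr
    linarith
  have h2 : (1 + v)⁻¹ ≤ 1 - v / (1 + 4 * a) := by
    have : v / (1 + 4 * a) ≤ v / (1 + v) := by gcongr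
    have e : (1 + v)⁻¹ = 1 - v / (1 + v) := by field_simp; ring
    linarith
  have h3 : -pngRate a * θ ^ 2 = -(v / (1 + 4 * a)) := by rw [hv]; unfold pngRate; ring
  rw [h3]
  linarith [add_one_le_exp (-(v / (1 + 4 * a)))]

/-- The bound `|pᴸ - qᴸ| ≤ L |p - q| max(p, q)^{L-1}`, in which the missing factor of the power
`L - 1` costs the constant `e^{cπ²}`. -/
lemma abs_pngSymbol_pow_sub_le {a : ℝ} (ha : 0 < a) {L : ℕ} (hL : 0 < L) {θ : ℝ}
    (hθ : |θ| ≤ π) :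
    |pngSymbol a θ ^ L - exp (-(a * L) * θ ^ 2)| ≤
      (2 * a + 2 * a ^ 2) * exp (pngRate a * π ^ 2) *
        (L * θ ^ 4 * exp (-pngRate a * (L * θ ^ 2))) := by
  have hp := pngSymbol_pos ha θ
  have hc := pngRate_pos ha
  have hq : exp (-a * θ ^ 2) ≤ exp (-pngRate a * θ ^ 2) := by
    apply exp_le_exp.2
    nlinarith [pngRate_le ha, sq_nonneg θ]
  have e : exp (-(a * L) * θ ^ 2) = exp (-a * θ ^ 2) ^ L := by
    rw [← exp_nat_mul]; congr 1; ring
  rw [e]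
  have hm : max |pngSymbol a θ| |exp (-a * θ ^ 2)| ≤ exp (-pngRate a * θ ^ 2) := by
    rw [abs_of_pos hp, abs_of_pos (exp_pos _)]
    exact max_le (pngSymbol_le_exp ha hθ) hq
  have hθ2 : θ ^ 2 ≤ π ^ 2 := sq_le_sq' (abs_le.1 hθ).1 (abs_le.1 hθ).2
  have hm2 : max |pngSymbol a θ| |exp (-a * θ ^ 2)| ^ (L - 1) ≤
      exp (pngRate a * π ^ 2) * exp (-pngRate a * (L * θ ^ 2)) := by
    refine (pow_le_pow_left₀ (le_max_of_le_left (abs_nonneg _)) hm _).trans ?_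
    rw [← exp_nat_mul, ← exp_add]
    apply exp_le_exp.2
    rw [Nat.cast_sub hL]
    push_cast
    nlinarith
  calc _ ≤ _ := abs_pow_sub_pow_le _ _ L
    _ ≤ ((2 * a + 2 * a ^ 2) * θ ^ 4) * L *
        (exp (pngRate a * π ^ 2) * exp (-pngRate a * (L * θ ^ 2))) := by
      gcongr
      exact abs_pngSymbol_sub_exp_le ha θ
    _ = _ := by ring

lemma exp_neg_mul_le_rate {a : ℝ} (ha : 0 < a) (L : ℕ) (θ : ℝ) :
    exp (-(a * L) * θ ^ 2) ≤ exp (-pngRate a * (L * θ ^ 2)) := by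
  apply exp_le_exp.2
  have : pngRate a * (L * θ ^ 2) ≤ a * (L * θ ^ 2) := by
    gcongr; exact pngRate_le ha
  linarith

lemma one_le_abs_of_notMem {θ : ℝ} (h : θ ∉ Set.Ioc (-π) π) : 1 ≤ |θ| := by
  have := pi_gt_three
  by_contra! h'
  rw [abs_lt] at h'
  exact h ⟨by linarith, by linarith⟩

/-! ### Pointwise bounds on the whole line -/

/-- Error of the truncated weight against the Gaussian, in the variable `t = R θ`, `R = √L`. -/
lemma exists_weight_bound {a : ℝ} (ha : 0 < a) : ∃ K, 0 < K ∧ ∀ L : ℕ, 0 < L → ∀ R : ℝ, 0 < R →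
    R ^ 2 = L → ∀ θ : ℝ,
    |(Set.Ioc (-π) π).indicator (fun θ => pngSymbol a θ ^ L) θ - exp (-(a * L) * θ ^ 2)| ≤
      K / R ^ 2 * pngEnvelope (pngRate a) (R * θ) := by
  refine ⟨(2 * a + 2 * a ^ 2) * exp (pngRate a * π ^ 2) + 1, by positivity, ?_⟩
  intro L hL R hR hRL θ
  obtain ⟨A, hA⟩ : ∃ A, A = (2 * a + 2 * a ^ 2) * exp (pngRate a * π ^ 2) := ⟨_, rfl⟩
  have hA0 : 0 < A := by rw [hA]; positivity
  have hL1 : (1 : ℝ) ≤ L := by exact_mod_cast hL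
  rw [← hA]
  have hX : |(Set.Ioc (-π) π).indicator (fun θ => pngSymbol a θ ^ L) θ - exp (-(a * L) * θ ^ 2)| ≤
      (A + 1) * (L * θ ^ 4 * exp (-pngRate a * (L * θ ^ 2))) := by
    have hE : 0 ≤ L * θ ^ 4 * exp (-pngRate a * (L * θ ^ 2)) := by positivity
    by_cases hθ : θ ∈ Set.Ioc (-π) π
    · rw [Set.indicator_of_mem hθ]
      have := abs_pngSymbol_pow_sub_le ha hL (abs_le.2 ⟨hθ.1.le, hθ.2⟩)
      rw [← hA] at this
      linarith
    · rw [Set.indicator_of_notMem hθ, zero_sub, abs_neg, abs_of_pos (exp_pos _)]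
      have h1 := one_le_abs_of_notMem hθ
      have h4 : 1 ≤ θ ^ 4 := by
        rw [← Even.pow_abs (by decide : Even 4)]; exact one_le_pow₀ h1
      have := exp_neg_mul_le_rate ha L θ
      have h5 : 1 ≤ L * θ ^ 4 := by nlinarith
      have h6 : 1 * exp (-pngRate a * (L * θ ^ 2)) ≤
        L * θ ^ 4 * exp (-pngRate a * (L * θ ^ 2)) := by gcongr
      nlinarith
  refine hX.trans ?_
  unfold pngEnvelope
  rw [mul_pow, hRL, abs_mul, abs_of_pos hR]
  have : (A + 1) * (L * θ ^ 4 * exp (-pngRate a * (L * θ ^ 2))) =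
      (A + 1) / L * ((R * |θ|) ^ 4 * exp (-pngRate a * (L * θ ^ 2))) := by
    rw [mul_pow, Even.pow_abs (by decide : Even 4), show R ^ 4 = (R ^ 2) ^ 2 by ring, hRL]
    field_simp
  rw [this]
  gcongr
  have : 0 ≤ (R * |θ|) ^ 3 := by positivity
  have : 0 ≤ (R * |θ|) ^ 5 := by positivity
  linarith

lemma one_sub_pngSymbol_le {a : ℝ} (ha : 0 < a) (θ : ℝ) :
    |pngSymbol a θ - 1| ≤ a * θ ^ 2 := by
  have h1 := one_sub_sq_div_two_le_cos (x := θ)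
  have h2 := cos_le_one θ
  have h0 : 0 ≤ 2 * a * (1 - cos θ) := mul_nonneg (by linarith) (by linarith)
  unfold pngSymbol
  have e : (1 + 2 * a * (1 - cos θ))⁻¹ - 1
      = -(2 * a * (1 - cos θ) / (1 + 2 * a * (1 - cos θ))) := by
    field_simp; ring
  rw [e, abs_neg, abs_of_nonneg (by positivity)]
  refine (div_le_self h0 (by linarith)).trans ?_
  nlinarith

/-- Error of the derivative of the weight against the derivative of the Gaussian, in the variable
`t = R θ`, `R = √L`. -/
lemma exists_deriv_bound {a : ℝ} (ha : 0 < a) : ∃ K, 0 < K ∧ ∀ L : ℕ, 0 < L → ∀ R : ℝ, 0 < R →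
    R ^ 2 = L → ∀ θ : ℝ,
    |(Set.Ioc (-π) π).indicator (fun θ => -(2 * a * L) * sin θ * pngSymbol a θ ^ (L + 1)) θ
        - -(2 * a * L) * θ * exp (-(a * L) * θ ^ 2)| ≤
      K / R * pngEnvelope (pngRate a) (R * θ) := by
  obtain ⟨A, hA⟩ : ∃ A, A = (2 * a + 2 * a ^ 2) * exp (pngRate a * π ^ 2) := ⟨_, rfl⟩
  have hA0 : 0 < A := by rw [hA]; positivity
  refine ⟨2 * a * (2 + a + A), by positivity, ?_⟩
  intro L hL R hR hRL θ
  have hL1 : (1 : ℝ) ≤ L := by exact_mod_cast hL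
  obtain ⟨E, hE⟩ : ∃ E, E = exp (-pngRate a * (L * θ ^ 2)) := ⟨_, rfl⟩
  have hE0 : 0 < E := by rw [hE]; positivity
  have habs := abs_nonneg θ
  have hX : |(Set.Ioc (-π) π).indicator (fun θ => sin θ * pngSymbol a θ ^ (L + 1)) θ
        - θ * exp (-(a * L) * θ ^ 2)| ≤
      ((2 + a) * |θ| ^ 3 + A * (L * |θ| ^ 5)) * E := by
    by_cases hθ : θ ∈ Set.Ioc (-π) π
    · have hθ' : |θ| ≤ π := abs_le.2 ⟨hθ.1.le, hθ.2⟩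
      rw [Set.indicator_of_mem hθ]
      have hd := abs_pngSymbol_pow_sub_le ha hL hθ'
      rw [← hA, ← hE] at hd
      have hp := pngSymbol_pos ha θ
      have hpL : pngSymbol a θ ^ L ≤ E := by
        refine (pow_le_pow_left₀ hp.le (pngSymbol_le_exp ha hθ') L).trans (le_of_eq ?_)
        rw [hE, ← exp_nat_mul]; congr 1; ring
      have hp1 : pngSymbol a θ ≤ 1 := by
        unfold pngSymbol
        have := cos_le_one θ
        have h0 : 0 ≤ 2 * a * (1 - cos θ) := mul_nonneg (by linarith) (by linarith)
        exact inv_le_one_of_one_le₀ (by linarith)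
      have hpL1 : pngSymbol a θ ^ (L + 1) ≤ E :=
        (pow_le_pow_of_le_one hp.le hp1 (Nat.le_succ L)).trans hpL
      calc _ = |(sin θ - θ) * pngSymbol a θ ^ (L + 1)
              + θ * (pngSymbol a θ ^ L * (pngSymbol a θ - 1))
              + θ * (pngSymbol a θ ^ L - exp (-(a * L) * θ ^ 2))| := by congr 1; ring
        _ ≤ |(sin θ - θ) * pngSymbol a θ ^ (L + 1)|
              + |θ * (pngSymbol a θ ^ L * (pngSymbol a θ - 1))|
              + |θ * (pngSymbol a θ ^ L - exp (-(a * L) * θ ^ 2))| := abs_add_three _ _ _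
        _ = |sin θ - θ| * pngSymbol a θ ^ (L + 1)
              + |θ| * (pngSymbol a θ ^ L * |pngSymbol a θ - 1|)
              + |θ| * |pngSymbol a θ ^ L - exp (-(a * L) * θ ^ 2)| := by
            simp only [abs_mul, abs_of_pos (pow_pos hp _)]
        _ ≤ (2 * |θ| ^ 3) * E + |θ| * (E * (a * θ ^ 2)) + |θ| * (A * (L * θ ^ 4 * E)) := by
            gcongr
            · exact abs_sin_sub_le θ
            · exact one_sub_pngSymbol_le ha θ
        _ = _ := by
            rw [← sq_abs θ, ← Even.pow_abs (by decide : Even 4) θ]; ring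
    · rw [Set.indicator_of_notMem hθ, zero_sub, abs_neg, abs_mul, abs_of_pos (exp_pos _)]
      have h1 := one_le_abs_of_notMem hθ
      have h3 : |θ| ≤ |θ| ^ 3 := le_self_pow₀ h1 (by norm_num)
      have hq := exp_neg_mul_le_rate ha L θ
      rw [← hE] at hq
      have h0 : 0 ≤ A * (L * |θ| ^ 5) := by positivity
      have h4 : 0 ≤ (1 + a) * |θ| ^ 3 := by positivity
      gcongr
      linarith
  have e : (Set.Ioc (-π) π).indicator (fun θ => -(2 * a * L) * sin θ * pngSymbol a θ ^ (L + 1)) θ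
        - -(2 * a * L) * θ * exp (-(a * L) * θ ^ 2) = -(2 * a * L) *
      ((Set.Ioc (-π) π).indicator (fun θ => sin θ * pngSymbol a θ ^ (L + 1)) θ
        - θ * exp (-(a * L) * θ ^ 2)) := by
    by_cases hθ : θ ∈ Set.Ioc (-π) π
    · simp only [Set.indicator_of_mem hθ]; ring
    · simp only [Set.indicator_of_notMem hθ]; ring
  rw [e, abs_mul, abs_neg, abs_of_nonneg (by positivity : 0 ≤ 2 * a * (L : ℝ))]
  refine (mul_le_mul_of_nonneg_left hX (by positivity)).trans ?_
  unfold pngEnvelope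
  rw [mul_pow, hRL, abs_mul, abs_of_pos hR, ← hE]
  have : 2 * a * L * (((2 + a) * |θ| ^ 3 + A * (L * |θ| ^ 5)) * E) =
      2 * a * ((2 + a) * (R * |θ|) ^ 3 + A * (R * |θ|) ^ 5) / R * E := by
    rw [← hRL]; field_simp
  rw [this]
  have h3 : 0 ≤ (R * |θ|) ^ 3 := by positivity
  have h4 : 0 ≤ (R * |θ|) ^ 4 := by positivity
  have h5 : 0 ≤ (R * |θ|) ^ 5 := by positivity
  have h6 : (2 + a) * (R * |θ|) ^ 3 + A * (R * |θ|) ^ 5 ≤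
      (2 + a + A) * ((R * |θ|) ^ 3 + (R * |θ|) ^ 4 + (R * |θ|) ^ 5) := by
    have := mul_nonneg hA0.le h3
    have := mul_nonneg hA0.le h4
    have := mul_nonneg ha.le h4
    have := mul_nonneg ha.le h5
    linarith
  calc _ ≤ 2 * a * ((2 + a + A) * ((R * |θ|) ^ 3 + (R * |θ|) ^ 4 + (R * |θ|) ^ 5)) / R * E := by
        gcongr
    _ = _ := by ring

/-! ### Integrals -/

lemma integrable_pngEnvelope {c : ℝ} (hc : 0 < c) : Integrable (pngEnvelope c) := by
  have h : ∀ n : ℕ, Integrable (fun t : ℝ => |t| ^ n * exp (-c * t ^ 2)) := by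
    intro n
    have := (integrable_rpow_mul_exp_neg_mul_sq hc (s := n)
      (by have : (0 : ℝ) ≤ n := n.cast_nonneg
          linarith)).norm
    refine this.congr (ae_of_all _ fun t => ?_)
    simp [abs_of_pos (exp_pos _)]
  refine (((h 3).add (h 4)).add (h 5)).congr (ae_of_all _ fun t => ?_)
  simp only [Pi.add_apply, pngEnvelope]; ring

/-- Comparison of an integral over `[-π, π]` with one over `ℝ`, from a pointwise bound by a
rescaled integrable function; the substitution `t = R θ` produces the factor `R⁻¹`. -/
lemma abs_integral_sub_le {w f g H : ℝ → ℝ} (hw : Continuous w) (hw1 : ∀ θ, |w θ| ≤ 1)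
    (hf : Continuous f) (hg : Integrable g) (hH : Integrable H) {R M : ℝ} (hR : 0 < R)
    (h : ∀ θ, |(Set.Ioc (-π) π).indicator f θ - g θ| ≤ M * H (R * θ)) :
    |(∫ θ in (-π)..π, w θ * f θ) - ∫ θ, w θ * g θ| ≤ M / R * ∫ t, H t := by
  have hpi := pi_pos
  have h1 : (∫ θ in (-π)..π, w θ * f θ) = ∫ θ, w θ * (Set.Ioc (-π) π).indicator f θ := by
    rw [intervalIntegral.integral_of_le (by linarith), ← integral_indicator measurableSet_Ioc]
    congr 1; ext θ
    by_cases hθ : θ ∈ Set.Ioc (-π) π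
    · simp only [Set.indicator_of_mem hθ]
    · simp only [Set.indicator_of_notMem hθ, mul_zero]
  have hfi : Integrable ((Set.Ioc (-π) π).indicator f) :=
    (integrable_indicator_iff measurableSet_Ioc).2
      ((hf.integrableOn_Icc).mono_set Set.Ioc_subset_Icc_self)
  have hwm := hw.aestronglyMeasurable (μ := volume)
  have hwb : ∀ᵐ θ, ‖w θ‖ ≤ 1 := ae_of_all _ hw1
  rw [h1, ← integral_sub (hfi.bdd_mul hwm hwb) (hg.bdd_mul hwm hwb), ← norm_eq_abs]
  refine (norm_integral_le_of_norm_le ((hH.comp_mul_left' hR.ne').const_mul M)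
    (ae_of_all _ fun θ => ?_)).trans (le_of_eq ?_)
  · rw [← mul_sub, norm_mul, norm_eq_abs, norm_eq_abs]
    calc _ ≤ 1 * _ := mul_le_mul_of_nonneg_right (hw1 θ) (abs_nonneg _)
      _ = _ := one_mul _
      _ ≤ _ := h θ
  · rw [integral_const_mul, Measure.integral_comp_mul_left, abs_of_pos (inv_pos.2 hR), smul_eq_mul]
    ring

lemma integral_cos_mul_gaussian {b : ℝ} (hb : 0 < b) (k : ℝ) :
    ∫ θ : ℝ, cos (k * θ) * exp (-b * θ ^ 2) = sqrt (π / b) * exp (-k ^ 2 / (4 * b)) := by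
  have h := fourierIntegral_gaussian (b := (b : ℂ)) (by simpa using hb) (k : ℂ)
  have hr : ((π : ℂ) / b) ^ (1 / 2 : ℂ) * Complex.exp (-(k : ℂ) ^ 2 / (4 * b)) =
      ((sqrt (π / b) * exp (-k ^ 2 / (4 * b)) : ℝ) : ℂ) := by
    rw [sqrt_eq_rpow]
    push_cast [Complex.ofReal_cpow (by positivity : 0 ≤ π / b)]
    rfl
  rw [hr] at h
  have hpt : ∀ θ : ℝ, Complex.exp (Complex.I * k * θ) * Complex.exp (-b * θ ^ 2) =
      Complex.exp ((k * θ : ℝ) * Complex.I) * ((exp (-b * θ ^ 2) : ℝ) : ℂ) := by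
    intro θ; push_cast; congr 2; ring
  have hI : Integrable (fun θ : ℝ =>
      Complex.exp ((k * θ : ℝ) * Complex.I) * ((exp (-b * θ ^ 2) : ℝ) : ℂ)) := by
    refine ((integrable_exp_neg_mul_sq hb).ofReal).bdd_mul (c := 1) ?_ (ae_of_all _ fun θ => ?_)
    · exact Continuous.aestronglyMeasurable (by fun_prop)
    · rw [Complex.norm_exp_ofReal_mul_I]
  simp_rw [hpt] at h
  have h2 := integral_re hI
  rw [h] at h2
  simp only [RCLike.re_to_complex, Complex.ofReal_re, Complex.re_mul_ofReal,
    Complex.exp_ofReal_mul_I_re] at h2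
  exact h2

lemma hasDerivAt_pngSymbol_pow {a : ℝ} (ha : 0 < a) (L : ℕ) (θ : ℝ) :
    HasDerivAt (fun θ => pngSymbol a θ ^ L)
      (-(2 * a * L) * sin θ * pngSymbol a θ ^ (L + 1)) θ := by
  have hp := pngSymbol_pos ha θ
  have h0 : 1 + 2 * a * (1 - cos θ) ≠ 0 := by
    intro h; unfold pngSymbol at hp; rw [h] at hp; simp at hp
  have h1 : HasDerivAt (fun θ => 1 + 2 * a * (1 - cos θ)) (2 * a * sin θ) θ := by
    simpa using (((hasDerivAt_cos θ).const_sub 1).const_mul (2 * a)).const_add 1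
  have h2 := (h1.fun_inv h0).fun_pow L
  refine h2.congr_deriv ?_
  unfold pngSymbol
  rcases L with _ | L
  · simp
  · simp only [Nat.add_sub_cancel]
    rw [pow_succ _ (L + 1), pow_succ _ L]
    field_simp

lemma continuous_pngSymbol {a : ℝ} (ha : 0 < a) : Continuous (pngSymbol a) := by
  have : ∀ θ, HasDerivAt (pngSymbol a) _ θ := fun θ => by
    simpa using hasDerivAt_pngSymbol_pow ha 1 θ
  exact continuous_iff_continuousAt.2 fun θ => (this θ).continuousAt

lemma integrable_mul_gaussian {b : ℝ} (hb : 0 < b) :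
    Integrable fun θ : ℝ => θ * exp (-b * θ ^ 2) := by
  simpa using integrable_rpow_mul_exp_neg_mul_sq hb (s := 1) (by norm_num)

/-- The asymptotics in unscaled variables: the lattice Fourier coefficient and the Gaussian
Fourier transform differ by `O(R⁻³)`, and by `O(R⁻²)` after multiplication by `k`, where
`R = √L`. -/
lemma exists_fourier_bound {a : ℝ} (ha : 0 < a) : ∃ K, 0 < K ∧ ∀ L : ℕ, 0 < L → ∀ R : ℝ, 0 < R →
    R ^ 2 = L → ∀ k : ℤ,
    |(∫ θ in (-π)..π, cos (k * θ) * pngSymbol a θ ^ L)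
        - ∫ θ : ℝ, cos (k * θ) * exp (-(a * L) * θ ^ 2)| ≤ K / R ^ 3 ∧
    |(k : ℝ)| * |(∫ θ in (-π)..π, cos (k * θ) * pngSymbol a θ ^ L)
        - ∫ θ : ℝ, cos (k * θ) * exp (-(a * L) * θ ^ 2)| ≤ K / R ^ 2 := by
  obtain ⟨K1, hK1, H1⟩ := exists_weight_bound ha
  obtain ⟨K2, hK2, H2⟩ := exists_deriv_bound ha
  have hH := integrable_pngEnvelope (pngRate_pos ha)
  have hJ : 0 ≤ ∫ t, pngEnvelope (pngRate a) t :=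
    integral_nonneg fun t => by unfold pngEnvelope; positivity
  obtain ⟨J, hJe⟩ : ∃ J, J = ∫ t, pngEnvelope (pngRate a) t := ⟨_, rfl⟩
  rw [← hJe] at hJ
  refine ⟨(K1 + K2) * (J + 1), by positivity, ?_⟩
  intro L hL R hR hRL k
  have hLpos : (0 : ℝ) < L := by exact_mod_cast hL
  have hb : 0 < a * L := by positivity
  have hcont := continuous_pngSymbol ha
  constructor
  · have := abs_integral_sub_le (w := fun θ => cos (k * θ)) (f := fun θ => pngSymbol a θ ^ L)
      (by fun_prop) (fun θ => abs_cos_le_one _) (by fun_prop) (integrable_exp_neg_mul_sq hb) hH hR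
      (H1 L hL R hR hRL)
    refine this.trans ?_
    rw [← hJe, div_div, ← pow_succ, div_mul_eq_mul_div]
    gcongr <;> linarith
  · have := abs_integral_sub_le (w := fun θ => sin (k * θ))
      (f := fun θ => -(2 * a * L) * sin θ * pngSymbol a θ ^ (L + 1))
      (g := fun θ => -(2 * a * L) * θ * exp (-(a * L) * θ ^ 2))
      (by fun_prop) (fun θ => abs_sin_le_one _) (by fun_prop)
      (by simpa [mul_assoc] using (integrable_mul_gaussian hb).const_mul (-(2 * a * L))) hH hR
      (H2 L hL R hR hRL)
    have hs : ∀ θ : ℝ, HasDerivAt (fun θ : ℝ => sin (k * θ)) (k * cos (k * θ)) θ := fun θ => by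
      have := ((hasDerivAt_id θ).const_mul (k : ℝ)).sin
      simpa [mul_comm] using this
    -- the boundary terms vanish because `k` is an integer
    have e1 : (k : ℝ) * ∫ θ in (-π)..π, cos (k * θ) * pngSymbol a θ ^ L =
        - ∫ θ in (-π)..π, sin (k * θ) * (-(2 * a * L) * sin θ * pngSymbol a θ ^ (L + 1)) := by
      have := intervalIntegral.integral_mul_deriv_eq_deriv_mul (a := -π) (b := π)
        (u := fun θ => pngSymbol a θ ^ L)
        (fun θ _ => hasDerivAt_pngSymbol_pow ha L θ) (fun θ _ => hs θ)
        (Continuous.intervalIntegrable (by fun_prop) _ _)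
        (Continuous.intervalIntegrable (by fun_prop) _ _)
      rw [mul_neg, sin_neg, sin_int_mul_pi] at this
      rw [← intervalIntegral.integral_const_mul]
      simp only [mul_zero, neg_zero, sub_zero, zero_sub] at this
      refine Eq.trans ?_ (this.trans ?_)
      · congr 1; ext θ; ring
      · congr 2; ext θ; ring
    have hsb : ∀ᵐ θ : ℝ, ‖sin (k * θ)‖ ≤ 1 := ae_of_all _ fun θ => abs_sin_le_one _
    have hcb : ∀ᵐ θ : ℝ, ‖cos (k * θ)‖ ≤ 1 := ae_of_all _ fun θ => abs_cos_le_one _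
    have hsm : AEStronglyMeasurable (fun θ : ℝ => sin (k * θ)) :=
      Continuous.aestronglyMeasurable (by fun_prop)
    have hcm : AEStronglyMeasurable (fun θ : ℝ => cos (k * θ)) :=
      Continuous.aestronglyMeasurable (by fun_prop)
    have e2 : (k : ℝ) * ∫ θ : ℝ, cos (k * θ) * exp (-(a * L) * θ ^ 2) =
        - ∫ θ : ℝ, sin (k * θ) * (-(2 * a * L) * θ * exp (-(a * L) * θ ^ 2)) := by
      have hg : ∀ θ : ℝ, HasDerivAt (fun θ : ℝ => exp (-(a * L) * θ ^ 2))
          (-(2 * a * L) * θ * exp (-(a * L) * θ ^ 2)) θ := fun θ => by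
        have := (((hasDerivAt_id θ).pow 2).const_mul (-(a * L))).exp
        refine this.congr_deriv ?_
        simp; ring
      have := integral_mul_deriv_eq_deriv_mul_of_integrable
        (u := fun θ : ℝ => exp (-(a * L) * θ ^ 2)) (fun θ _ => hg θ) (fun θ _ => hs θ)
        ((((integrable_exp_neg_mul_sq hb).bdd_mul hcm hcb).const_mul (k : ℝ)).congr
          (ae_of_all _ fun θ => by simp only [Pi.mul_apply]; ring))
        ((((integrable_mul_gaussian hb).bdd_mul hsm hsb).const_mul (-(2 * a * L))).congr
          (ae_of_all _ fun θ => by simp only [Pi.mul_apply]; ring))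
        (((integrable_exp_neg_mul_sq hb).bdd_mul hsm hsb).congr
          (ae_of_all _ fun θ => by simp only [Pi.mul_apply]; ring))
      rw [← integral_const_mul]
      refine Eq.trans ?_ (this.trans ?_)
      · congr 1; ext θ; ring
      · congr 2; ext θ; ring
    rw [← abs_mul, mul_sub, e1, e2, ← neg_sub', abs_neg]
    refine this.trans ?_
    rw [← hJe, div_div, ← sq, div_mul_eq_mul_div]
    gcongr <;> linarith

/-! ### Scaling -/

/-- Asymptotics of the PNG transition function
`φ_N(x,y) = (1/2π)∫_{−π}^{π} cos((y−x)θ)·(1−α)^{2L}(1+α²−2α cos θ)^{−L} dθ` with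
`L = (1+α)(1−α)^{−1} d^{−1} s N^γ`:
`φ_N(x,y)` is within `C N^{−3γ/2}` of the Gaussian kernel
`(dN^{1/3})^{−1}(4πsN^{γ−2/3})^{−1/2} exp(−(x′−y′)²/(4sN^{γ−2/3}))`, and within
`C N^{−1/3−γ}/|x′−y′|` of it when `x′ ≠ y′`. -/
theorem png_transition_asymptotics (α s γ : ℝ) (hα0 : 0 < α) (hα1 : α < 1) (hs : 0 < s)
    (hγ0 : 0 < γ) (hγ : γ < 2 / 3) :
    ∃ C > 0, ∀ N : ℕ, 2 ≤ N → ∀ L : ℕ, 0 < L →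
      (L : ℝ) = (1 + α) / (1 - α) * (α ^ ((1:ℝ)/3) * (1 + α) ^ ((1:ℝ)/3) / (1 - α))⁻¹ *
          s * (N : ℝ) ^ γ →
      ∀ x y : ℤ,
      let d : ℝ := α ^ ((1:ℝ)/3) * (1 + α) ^ ((1:ℝ)/3) / (1 - α)
      let μ : ℝ := 2 * α / (1 - α)
      let x' : ℝ := ((x : ℝ) - μ * N) / (d * (N : ℝ) ^ ((1:ℝ)/3))
      let y' : ℝ := ((y : ℝ) - μ * N) / (d * (N : ℝ) ^ ((1:ℝ)/3))
      let φN : ℝ := (1 / (2 * Real.pi)) *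
        ∫ θ in (-Real.pi)..Real.pi,
          Real.cos (((y : ℝ) - (x : ℝ)) * θ) * (1 - α) ^ (2 * L) /
            (1 + α ^ 2 - 2 * α * Real.cos θ) ^ L
      let G : ℝ := (1 / (d * (N : ℝ) ^ ((1:ℝ)/3))) *
        ((1 / Real.sqrt (4 * Real.pi * s * (N : ℝ) ^ (γ - 2/3))) *
          Real.exp (-(x' - y') ^ 2 / (4 * s * (N : ℝ) ^ (γ - 2/3))))
      |φN - G| ≤ C * (N : ℝ) ^ (-(3 * γ) / 2) ∧
        (x' ≠ y' → |φN - G| ≤ C * (N : ℝ) ^ (-(1:ℝ)/3 - γ) / |x' - y'|) := by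
  have h1α : 0 < 1 - α := by linarith
  obtain ⟨a, hae⟩ : ∃ a, a = α / (1 - α) ^ 2 := ⟨_, rfl⟩
  have ha : 0 < a := by rw [hae]; positivity
  obtain ⟨K, hK, H⟩ := exists_fourier_bound ha
  obtain ⟨d, hd⟩ : ∃ d, d = α ^ ((1:ℝ)/3) * (1 + α) ^ ((1:ℝ)/3) / (1 - α) := ⟨_, rfl⟩
  have hd0 : 0 < d := by rw [hd]; positivity
  have hd3 : d ^ 3 = α * (1 + α) / (1 - α) ^ 3 := by
    have cube : ∀ t : ℝ, 0 < t → (t ^ ((1:ℝ)/3)) ^ 3 = t := fun t ht => by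
      rw [← rpow_natCast, ← rpow_mul ht.le]; norm_num
    rw [hd, div_pow, mul_pow, cube α hα0, cube (1 + α) (by linarith)]
  obtain ⟨κ, hκ⟩ : ∃ κ, κ = (1 + α) / (1 - α) * d⁻¹ * s := ⟨_, rfl⟩
  have hκ0 : 0 < κ := by rw [hκ]; positivity
  -- the variance matches: `a L = d² s N^γ`
  have haκ : a * κ = d ^ 2 * s := by
    have : d ^ 2 = d ^ 3 * d⁻¹ := by field_simp
    rw [this, hd3, hae, hκ]; field_simp
  rw [← hd, ← hκ]
  refine ⟨K / (2 * π) * (1 / sqrt κ ^ 3 + 1 / (d * κ)), by positivity, ?_⟩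
  intro N hN L hL hLN x y d' μ x' y' φN G
  have hNpos : (0 : ℝ) < N := by exact_mod_cast (by omega : 0 < N)
  have hR : 0 < sqrt L := sqrt_pos.2 (by exact_mod_cast hL)
  have hRL : sqrt L ^ 2 = L := sq_sqrt (by positivity)
  obtain ⟨b1, b2⟩ := H L hL (sqrt L) hR hRL (y - x)
  obtain ⟨P, hP⟩ : ∃ P, P = (N : ℝ) ^ ((1:ℝ)/3) := ⟨_, rfl⟩
  have hP0 : 0 < P := by rw [hP]; positivity
  have hLpos : (0 : ℝ) < L := by exact_mod_cast hL
  have haL : a * L = d ^ 2 * s * (N : ℝ) ^ γ := by rw [hLN, ← haκ]; ring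
  have hpow : (N : ℝ) ^ (γ - 2/3) = (N : ℝ) ^ γ / P ^ 2 := by
    rw [rpow_sub hNpos, hP, ← rpow_natCast, ← rpow_mul hNpos.le]; norm_num
  have hdiff : x' - y' = -((y : ℝ) - x) / (d * P) := by
    simp only [x', y', ← hP, show d' = d from rfl]; ring
  have hG : G = 1 / (2 * π) * ∫ θ : ℝ, cos (((y - x : ℤ) : ℝ) * θ) * exp (-(a * L) * θ ^ 2) := by
    rw [integral_cos_mul_gaussian (by positivity)]
    simp only [G]
    rw [hdiff, hpow, ← hP, show d' = d from rfl, haL]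
    have hNγ : 0 < (N : ℝ) ^ γ := by positivity
    have e1 : sqrt (4 * π * s * ((N : ℝ) ^ γ / P ^ 2)) =
        2 * π / (d * P) / sqrt (π / (d ^ 2 * s * (N : ℝ) ^ γ)) := by
      rw [eq_div_iff (by positivity), ← sqrt_mul (by positivity)]
      rw [show 4 * π * s * ((N : ℝ) ^ γ / P ^ 2) * (π / (d ^ 2 * s * (N : ℝ) ^ γ)) =
        (2 * π / (d * P)) ^ 2 by field_simp; norm_num]
      exact sqrt_sq (by positivity)
    have e2 : -(-((y : ℝ) - x) / (d * P)) ^ 2 / (4 * s * ((N : ℝ) ^ γ / P ^ 2)) =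
        -((y - x : ℤ) : ℝ) ^ 2 / (4 * (d ^ 2 * s * (N : ℝ) ^ γ)) := by
      push_cast; field_simp
    rw [e1, e2]
    have := pi_pos
    field_simp
  have hφ : φN = 1 / (2 * π) *
      ∫ θ in (-π)..π, cos (((y - x : ℤ) : ℝ) * θ) * pngSymbol a θ ^ L := by
    simp only [φN]
    congr 2
    ext θ
    rw [mul_div_assoc, pow_mul, ← div_pow]
    push_cast
    congr 2
    have h0 : 0 ≤ 2 * α * (1 - cos θ) := mul_nonneg (by linarith) (by linarith [cos_le_one θ])
    have h1 : 1 + α ^ 2 - 2 * α * cos θ = (1 - α) ^ 2 + 2 * α * (1 - cos θ) := by ring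
    have h2 : 0 < (1 - α) ^ 2 + 2 * α * (1 - cos θ) := by positivity
    unfold pngSymbol
    rw [h1, hae, div_eq_iff h2.ne']
    have h3 : 1 + 2 * (α / (1 - α) ^ 2) * (1 - cos θ) =
        ((1 - α) ^ 2 + 2 * α * (1 - cos θ)) / (1 - α) ^ 2 := by field_simp
    rw [h3, inv_div, div_mul_cancel₀ _ h2.ne']
  have hpi := pi_pos
  rw [hφ, hG, ← mul_sub, abs_mul, abs_of_pos (by positivity : 0 < 1 / (2 * π))]
  obtain ⟨D, hD⟩ : ∃ D, D = |(∫ θ in (-π)..π, cos (((y - x : ℤ) : ℝ) * θ) * pngSymbol a θ ^ L)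
    - ∫ θ : ℝ, cos (((y - x : ℤ) : ℝ) * θ) * exp (-(a * L) * θ ^ 2)| := ⟨_, rfl⟩
  rw [← hD] at b1 b2 ⊢
  constructor
  · have e : sqrt L ^ 3 = sqrt κ ^ 3 * (N : ℝ) ^ (3 * γ / 2) := by
      rw [hLN, sqrt_mul hκ0.le, mul_pow, sqrt_eq_rpow ((N : ℝ) ^ γ), ← rpow_mul hNpos.le,
        ← rpow_natCast ((N : ℝ) ^ _), ← rpow_mul hNpos.le]
      congr 2; push_cast; ring
    rw [e] at b1
    rw [neg_div, rpow_neg hNpos.le]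
    calc 1 / (2 * π) * D ≤ 1 / (2 * π) * (K / (sqrt κ ^ 3 * (N : ℝ) ^ (3 * γ / 2))) := by gcongr
      _ = K / (2 * π) * (1 / sqrt κ ^ 3 + 0) * ((N : ℝ) ^ (3 * γ / 2))⁻¹ := by
        field_simp; ring
      _ ≤ _ := by gcongr; positivity
  · intro hne
    have hxy : x' - y' ≠ 0 := sub_ne_zero.2 hne
    have hpos : 0 < |x' - y'| := abs_pos.2 hxy
    have hk : |((y - x : ℤ) : ℝ)| = d * P * |x' - y'| := by
      rw [hdiff, abs_div, abs_neg, abs_of_pos (by positivity : 0 < d * P)]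
      push_cast; field_simp
    rw [hRL, hk, hLN] at b2
    have e : (N : ℝ) ^ (-(1:ℝ)/3 - γ) = 1 / (P * (N : ℝ) ^ γ) := by
      rw [rpow_sub hNpos, neg_div, rpow_neg hNpos.le, ← hP]; field_simp
    have hNγ : 0 < (N : ℝ) ^ γ := by positivity
    rw [e, le_div_iff₀ hpos]
    calc 1 / (2 * π) * D * |x' - y'| = 1 / (2 * π) * (d * P * |x' - y'| * D) / (d * P) := by
          field_simp
      _ ≤ 1 / (2 * π) * (K / (κ * (N : ℝ) ^ γ)) / (d * P) := by gcongr
      _ = K / (2 * π) * (0 + 1 / (d * κ)) * (1 / (P * (N : ℝ) ^ γ)) := by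
        field_simp; ring
      _ ≤ _ := by gcongr; positivity
end
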